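/- Let m, n be positive integers. The k_q-algebra homomorphism Λ^q_{(m,n)} : k_q[a]_{m,n} → k_q[SL_{m,n}] ⊗_{k_q} k_q[a]_{m,n} determined by a_{i,j} ↦ Σ_{k=-m}^{n-1} g_{i,k} ⊗ a_{k,j} exists (the prescribed values satisfy the quantum matrix relations) and maps the quantum grassmannian k_q[Δ_{m,n}] into k_q[SL_{m,n}] ⊗_{k_q} k_q[Δ_{m,n}]; explicitly, for every m-element subset I of {-m,...,n-1}, Λ^q(D_I) = Σ_J D^{g,J}_I ⊗ D_J, summed over all m-element subsets J of {-m,...,n-1}, where D^{g,J}_I is the quantum minor of (g_{i,j}) on rows I and columns J. Writing λ^q_{(m,n)} : k_q[Δ_{m,n}] → k_q[SL_{m,n}] ⊗ k_q[Δ_{m,n}] for the restriction, for all m' ≥ m, n' ≥ n the diagram commutes: (φ^q_{(m',n',m,n)} ⊗ e^q_{(m',n',m,n)}) ∘ λ^q_{(m',n')} = λ^q_{(m,n)} ∘ e^q_{(m',n',m,n)}. -/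

import Mathlib

set_option maxHeartbeats 2000000
set_option synthInstance.maxHeartbeats 400000

noncomputable section

open TensorProduct

/-- `k_q = k[q, q⁻¹]`, the ring of Laurent polynomials over `k`. -/
abbrev kq (k : Type) [Field k] : Type := LaurentPolynomial k

/-- The parameter `q ∈ k_q`. -/
def qParam (k : Type) [Field k] : kq k := LaurentPolynomial.T 1

/-- The inverse parameter `q⁻¹ ∈ k_q`. -/
def qInv (k : Type) [Field k] : kq k := LaurentPolynomial.T (-1)

/-- Row indices of the generic `(m+n) × m` quantum matrix: integers `-m, ..., n-1`. -/
abbrev RowI (m n : ℕ) : Type := ↥(Finset.Icc (-(m : ℤ)) ((n : ℤ) - 1))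

/-- Column indices: integers `-m, ..., -1`. -/
abbrev ColI (m : ℕ) : Type := ↥(Finset.Icc (-(m : ℤ)) (-1 : ℤ))

/-- The defining relations of a quantum matrix algebra, with rows indexed by `R` and
columns indexed by `C`. -/
inductive QMRel (k : Type) [Field k] (R C : Type) [LinearOrder R] [LinearOrder C] :
    FreeAlgebra (kq k) (R × C) → FreeAlgebra (kq k) (R × C) → Prop
  | col (i i' : R) (j : C) (h : i < i') :
      QMRel k R C (FreeAlgebra.ι (kq k) (i, j) * FreeAlgebra.ι (kq k) (i', j))
        (qInv k • (FreeAlgebra.ι (kq k) (i', j) * FreeAlgebra.ι (kq k) (i, j)))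
  | row (i : R) (j j' : C) (h : j < j') :
      QMRel k R C (FreeAlgebra.ι (kq k) (i, j) * FreeAlgebra.ι (kq k) (i, j'))
        (qInv k • (FreeAlgebra.ι (kq k) (i, j') * FreeAlgebra.ι (kq k) (i, j)))
  | comm (i i' : R) (j j' : C) (h1 : i < i') (h2 : j' < j) :
      QMRel k R C (FreeAlgebra.ι (kq k) (i, j) * FreeAlgebra.ι (kq k) (i', j'))
        (FreeAlgebra.ι (kq k) (i', j') * FreeAlgebra.ι (kq k) (i, j))
  | qcomm (i i' : R) (j j' : C) (h1 : i < i') (h2 : j < j') :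
      QMRel k R C
        (FreeAlgebra.ι (kq k) (i, j) * FreeAlgebra.ι (kq k) (i', j') -
          FreeAlgebra.ι (kq k) (i', j') * FreeAlgebra.ι (kq k) (i, j))
        ((qInv k - qParam k) • (FreeAlgebra.ι (kq k) (i', j) * FreeAlgebra.ι (kq k) (i, j')))

/-- The quantum matrix algebra with rows indexed by `R` and columns indexed by `C`. -/
abbrev QMatG (k : Type) [Field k] (R C : Type) [LinearOrder R] [LinearOrder C] : Type :=
  RingQuot (QMRel k R C)

/-- The generator `a_{r,c}` of the quantum matrix algebra. -/
def qgen (k : Type) [Field k] (R C : Type) [LinearOrder R] [LinearOrder C] (r : R) (c : C) :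
    QMatG k R C :=
  RingQuot.mkAlgHom (kq k) (QMRel k R C) (FreeAlgebra.ι (kq k) (r, c))

/-- The rectangular quantum matrix algebra `k_q[a]_{m,n}`. -/
abbrev QMat (k : Type) [Field k] (m n : ℕ) : Type := QMatG k (RowI m n) (ColI m)

/-- The generator `a_{i,j}` of `k_q[a]_{m,n}`. -/
def av (k : Type) [Field k] (m n : ℕ) (i : RowI m n) (j : ColI m) : QMat k m n :=
  qgen k (RowI m n) (ColI m) i j

/-- The number of inversions of a map between finite linearly ordered sets. -/
def inversions {a b : ℕ} (f : Fin a → Fin b) : ℕ :=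
  ((Finset.univ : Finset (Fin a × Fin a)).filter fun p => p.1 < p.2 ∧ f p.2 < f p.1).card

/-- The coefficient `(-q)^{-ℓ}`. -/
def qCoeff (k : Type) [Field k] (l : ℕ) : kq k :=
  (-1 : kq k) ^ l * LaurentPolynomial.T (-(l : ℤ))

/-- The general quantum minor on rows `row 0 < row 1 < ⋯` and columns
`col 0 < col 1 < ⋯`:
`Σ_σ (-q)^{-ℓ(σ)} a_{row 0, col (σ 0)} ⋯ a_{row (s-1), col (σ (s-1))}`. -/
def qMinorG (k : Type) [Field k] (R C : Type) [LinearOrder R] [LinearOrder C]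
    (s : ℕ) (row : Fin s → R) (col : Fin s → C) : QMatG k R C :=
  ∑ σ : Equiv.Perm (Fin s),
    qCoeff k (inversions ⇑σ) •
      (List.ofFn fun t : Fin s => qgen k R C (row t) (col (σ t))).prod

/-- The quantum minor `D_{i_0 … i_{m-1}}` of `k_q[a]_{m,n}` on the rows in `I`. -/
def qMinor (k : Type) [Field k] (m n : ℕ) (I : Finset ℤ) (hI : I.card = m)
    (hsub : I ⊆ Finset.Icc (-(m : ℤ)) ((n : ℤ) - 1)) : QMat k m n :=
  qMinorG k (RowI m n) (ColI m) m
    (fun s => ⟨I.orderEmbOfFin hI s, hsub (Finset.orderEmbOfFin_mem I hI s)⟩)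
    (fun t => ⟨-(m : ℤ) + (t : ℕ), by
      have := t.2
      simp only [Finset.mem_Icc]
      omega⟩)

/-- The quantum grassmannian `k_q[Δ_{m,n}]`: the subalgebra of `k_q[a]_{m,n}` generated
by the quantum minors. -/
def QDeltaSub (k : Type) [Field k] (m n : ℕ) : Subalgebra (kq k) (QMat k m n) :=
  Algebra.adjoin (kq k) {x | ∃ I hI hsub, x = qMinor k m n I hI hsub}

/-- The square quantum matrix algebra on the indices `-m, ..., n-1`. -/
abbrev SqMat (k : Type) [Field k] (m n : ℕ) : Type := QMatG k (RowI m n) (RowI m n)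

/-- `N = m + n`, the size of the square generic quantum matrix, as the cardinality of
the index set. -/
def NN (m n : ℕ) : ℕ := (Finset.Icc (-(m : ℤ)) ((n : ℤ) - 1)).card

/-- The quantum determinant of the generic square quantum matrix. -/
def sqDet (k : Type) [Field k] (m n : ℕ) : SqMat k m n :=
  qMinorG k (RowI m n) (RowI m n) (NN m n)
    (fun t => (Finset.Icc (-(m : ℤ)) ((n : ℤ) - 1)).orderIsoOfFin rfl t)
    (fun t => (Finset.Icc (-(m : ℤ)) ((n : ℤ) - 1)).orderIsoOfFin rfl t)

/-- The quantum special linear group ring `k_q[SL_{m,n}]`: the quotient of the square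
quantum matrix algebra by the two-sided ideal generated by `(quantum determinant) − 1`. -/
abbrev QSL (k : Type) [Field k] (m n : ℕ) : Type :=
  RingQuot (fun x y : SqMat k m n => x = sqDet k m n ∧ y = 1)

/-- The quotient map onto `k_q[SL_{m,n}]`. -/
def qslMk (k : Type) [Field k] (m n : ℕ) : SqMat k m n →ₐ[kq k] QSL k m n :=
  RingQuot.mkAlgHom (kq k) _

/-- The generator `g_{i,j}` of `k_q[SL_{m,n}]`. -/
def qgSL (k : Type) [Field k] (m n : ℕ) (i j : RowI m n) : QSL k m n :=
  qslMk k m n (qgen k (RowI m n) (RowI m n) i j)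

/-- `(-q)^z` for an integer exponent `z`. -/
def negqPow (k : Type) [Field k] (z : ℤ) : kq k :=
  (if Even z then 1 else -1) * LaurentPolynomial.T z

lemma card_erase_univ (m n : ℕ) (i : RowI m n) :
    ((Finset.univ : Finset (RowI m n)).erase i).card = NN m n - 1 := by
  simp [Finset.card_erase_of_mem, Finset.card_univ, NN]

/-- The quantum minor `D^{g,J}_I` of the generic square quantum matrix `(g_{i,j})` on
rows `I` and columns `J`, as an element of `k_q[SL_{m,n}]`. -/
def qgMinor (k : Type) [Field k] (m n s : ℕ) (I J : Finset ℤ)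
    (hI : I.card = s) (hJ : J.card = s)
    (hIs : I ⊆ Finset.Icc (-(m : ℤ)) ((n : ℤ) - 1))
    (hJs : J ⊆ Finset.Icc (-(m : ℤ)) ((n : ℤ) - 1)) : QSL k m n :=
  qslMk k m n (qMinorG k (RowI m n) (RowI m n) s
    (fun t => ⟨I.orderEmbOfFin hI t, hIs (Finset.orderEmbOfFin_mem I hI t)⟩)
    (fun t => ⟨J.orderEmbOfFin hJ t, hJs (Finset.orderEmbOfFin_mem J hJ t)⟩))

/-- The defining property of `E^q_{(m',n',m,n)}` on the generators. -/
def EqProp (k : Type) [Field k] (m n m' n' : ℕ)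
    (E : QMat k m' n' →ₐ[kq k] QMat k m n) : Prop :=
  ∀ (i : RowI m' n') (j : ColI m'),
    E (av k m' n' i j) =
      if h : (i.1 ∈ Finset.Icc (-(m : ℤ)) ((n : ℤ) - 1)) ∧
          (j.1 ∈ Finset.Icc (-(m : ℤ)) (-1 : ℤ)) then
        av k m n ⟨i.1, h.1⟩ ⟨j.1, h.2⟩
      else if i.1 = j.1 then 1 else 0

/-- The defining property of `φ^q_{(m',n',m,n)}` on the generators. -/
def phiqProp (k : Type) [Field k] (m n m' n' : ℕ)
    (φ : QSL k m' n' →ₐ[kq k] QSL k m n) : Prop :=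
  ∀ i j : RowI m' n',
    φ (qgSL k m' n' i j) =
      if h : (i.1 ∈ Finset.Icc (-(m : ℤ)) ((n : ℤ) - 1)) ∧
          (j.1 ∈ Finset.Icc (-(m : ℤ)) ((n : ℤ) - 1)) then
        qgSL k m n ⟨i.1, h.1⟩ ⟨j.1, h.2⟩
      else if i.1 = j.1 then 1 else 0

/-- The defining property of the coaction `Λ^q_{(m,n)}` on the generators:
`a_{i,j} ↦ Σ_l g_{i,l} ⊗ a_{l,j}`. -/
def coactqProp (k : Type) [Field k] (m n : ℕ)
    (Λ : QMat k m n →ₐ[kq k] QSL k m n ⊗[kq k] QMat k m n) : Prop :=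
  ∀ (i : RowI m n) (j : ColI m),
    Λ (av k m n i j) = ∑ l : RowI m n, qgSL k m n i l ⊗ₜ[kq k] av k m n l j

lemma qInv_mul_qParam (k : Type) [Field k] : qInv k * qParam k = 1 := by
  rw [qInv, qParam, ← LaurentPolynomial.T_add]
  simp

lemma qParam_mul_qInv (k : Type) [Field k] : qParam k * qInv k = 1 := by
  rw [qInv, qParam, ← LaurentPolynomial.T_add]
  simp

/-- Diagonal coefficient of the braided R-matrix. -/
def rc (k : Type) [Field k] {X : Type} [LinearOrder X] (i j : X) : kq k :=
  if i = j then qInv k else if i < j then qInv k - qParam k else 0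

/-- Off-diagonal coefficient of the braided R-matrix. -/
def rw' (k : Type) [Field k] {X : Type} [LinearOrder X] (i j : X) : kq k :=
  if i = j then 0 else 1

lemma rw'_comm (k : Type) [Field k] {X : Type} [LinearOrder X] (i j : X) :
    rw' k i j = rw' k j i := by
  simp [rw', eq_comm]

/-- A quantum matrix, in RTT form. -/
def IsQM (k : Type) [Field k] {R C A : Type} [LinearOrder R] [LinearOrder C]
    [Semiring A] [Algebra (kq k) A] (x : R → C → A) : Prop :=
  ∀ i i' j j', rc k i i' • (x i j * x i' j') + rw' k i i' • (x i' j * x i j') =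
    rc k j j' • (x i j * x i' j') + rw' k j j' • (x i j' * x i' j)

section rel
variable (k : Type) [Field k] (R C : Type) [LinearOrder R] [LinearOrder C]

lemma qgen_col (i i' : R) (j : C) (h : i < i') :
    qgen k R C i j * qgen k R C i' j = qInv k • (qgen k R C i' j * qgen k R C i j) := by
  have := RingQuot.mkAlgHom_rel (kq k) (QMRel.col (k := k) i i' j h)
  simpa [qgen] using this

lemma qgen_row (i : R) (j j' : C) (h : j < j') :
    qgen k R C i j * qgen k R C i j' = qInv k • (qgen k R C i j' * qgen k R C i j) := by
  have := RingQuot.mkAlgHom_rel (kq k) (QMRel.row (k := k) i j j' h)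
  simpa [qgen] using this

lemma qgen_comm (i i' : R) (j j' : C) (h1 : i < i') (h2 : j' < j) :
    qgen k R C i j * qgen k R C i' j' = qgen k R C i' j' * qgen k R C i j := by
  have := RingQuot.mkAlgHom_rel (kq k) (QMRel.comm (k := k) i i' j j' h1 h2)
  simpa [qgen] using this

lemma freeAlgebra_sub (X : Type) (a b : FreeAlgebra (kq k) X) :
    a - b = a + (-1 : kq k) • b := by
  rw [sub_eq_add_neg]
  congr 1

lemma qgen_qcomm (i i' : R) (j j' : C) (h1 : i < i') (h2 : j < j') :
    qgen k R C i j * qgen k R C i' j' = (qInv k - qParam k) • (qgen k R C i' j * qgen k R C i j') +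
      qgen k R C i' j' * qgen k R C i j := by
  have := RingQuot.mkAlgHom_rel (kq k) (QMRel.qcomm (k := k) i i' j j' h1 h2)
  rw [freeAlgebra_sub, map_add, map_smul, map_smul, map_mul, map_mul, map_mul] at this
  change qgen k R C i j * qgen k R C i' j' + (-1 : kq k) • (qgen k R C i' j' * qgen k R C i j) =
    (qInv k - qParam k) • (qgen k R C i' j * qgen k R C i j') at this
  rw [← this]
  module

lemma isQM_qgen : IsQM k (qgen k R C) := by
  intro i i' j j'
  rcases lt_trichotomy i i' with h | h | h <;> rcases lt_trichotomy j j' with h' | h' | h'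
  · simp [rc, rw', h.ne, h'.ne, h, h', qgen_comm k R C i i' j' j h h']
  · subst h'
    simp [rc, rw', h.ne, h, qgen_col k R C i i' j h]
    match_scalars
    linear_combination - qInv_mul_qParam k
  · have := qgen_qcomm k R C i i' j' j h h'
    simp [rc, rw', h.ne, h'.ne', h, h'.not_gt]
    rw [qgen_comm k R C i i' j j' h h', this]
  · subst h
    simp [rc, rw', h'.ne, h', qgen_row k R C i j j' h']
    match_scalars
    linear_combination qInv_mul_qParam k
  · subst h; subst h'; simp [rc, rw']
  · subst h
    simp [rc, rw', h'.ne', h'.not_gt, qgen_row k R C i j' j h']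
  · have := qgen_qcomm k R C i' i j j' h h'
    simp [rc, rw', h.ne', h'.ne, h.not_gt, h']
    rw [this]
  · subst h'
    simp [rc, rw', h.ne', h.not_gt, qgen_col k R C i' i j h]
  · simp [rc, rw', h.ne', h'.ne', h.not_gt, h'.not_gt, qgen_comm k R C i' i j j' h h']
end rel

lemma IsQM.map {k : Type} [Field k] {R C A B : Type} [LinearOrder R] [LinearOrder C]
    [Semiring A] [Algebra (kq k) A] [Semiring B] [Algebra (kq k) B] {x : R → C → A} (hx : IsQM k x)
    (f : A →ₐ[kq k] B) : IsQM k (fun i j => f (x i j)) := by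
  intro i i' j j'
  have := congrArg f (hx i i' j j')
  simpa using this

lemma IsQM.lift {k : Type} [Field k] {R C A : Type} [LinearOrder R] [LinearOrder C]
    [Semiring A] [Algebra (kq k) A] {x : R → C → A} (hx : IsQM k x) :
    ∃ f : QMatG k R C →ₐ[kq k] A, ∀ i j, f (qgen k R C i j) = x i j := by
  refine ⟨RingQuot.liftAlgHom (kq k) ⟨FreeAlgebra.lift (kq k) (fun p : R × C => x p.1 p.2), ?_⟩,
    ?_⟩
  · intro a b h
    induction h with
    | col i i' j h =>
      have := hx i' i j j
      simp [rc, rw', h.ne', h.not_gt] at this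
      simpa using this
    | row i j j' h =>
      have := hx i i j' j
      simp [rc, rw', h.ne', h.not_gt] at this
      simpa using this.symm
    | comm i i' j j' h1 h2 =>
      have := hx i' i j j'
      simp [rc, rw', h1.ne', h1.not_gt, h2.ne', h2.not_gt] at this
      simpa using this
    | qcomm i i' j j' h1 h2 =>
      have h3 := hx i' i j j'
      simp [rc, rw', h1.ne', h1.not_gt, h2.ne, h2] at h3
      have h4 := hx i' i j' j
      simp [rc, rw', h1.ne', h1.not_gt, h2.ne', h2.not_gt] at h4
      rw [freeAlgebra_sub]
      simp [h3]
      module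
  · intro i j
    simp [qgen]

lemma IsQM.comul {k : Type} [Field k] {R M C A B : Type} [LinearOrder R] [LinearOrder C]
    [LinearOrder M] [Fintype M]
    [Semiring A] [Algebra (kq k) A] [Semiring B] [Algebra (kq k) B] {x : R → M → A} (hx : IsQM k x)
    {y : M → C → B} (hy : IsQM k y) :
    IsQM k (fun i j => ∑ l, x i l ⊗ₜ[kq k] y l j) := by
  intro i i' j j'
  have key : ∀ i i' j j', (∑ l, x i l ⊗ₜ[kq k] y l j) * (∑ l, x i' l ⊗ₜ[kq k] y l j') =
      ∑ l, ∑ p, (x i l * x i' p) ⊗ₜ[kq k] (y l j * y p j') := by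
    intro i i' j j'
    rw [Finset.sum_mul_sum]
    simp only [Algebra.TensorProduct.tmul_mul_tmul]
  simp only [key]
  have h1 : rc k i i' • (∑ l, ∑ p, (x i l * x i' p) ⊗ₜ[kq k] (y l j * y p j')) +
      rw' k i i' • (∑ l, ∑ p, (x i' l * x i p) ⊗ₜ[kq k] (y l j * y p j')) =
      ∑ l, ∑ p, (rc k l p • (x i l * x i' p) + rw' k l p • (x i p * x i' l))
        ⊗ₜ[kq k] (y l j * y p j') := by
    have hx' := fun l p => (hx i i' l p).symm
    simp only [hx', Finset.smul_sum, ← Finset.sum_add_distrib, TensorProduct.add_tmul,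
      TensorProduct.smul_tmul']
  have h2 : rc k j j' • (∑ l, ∑ p, (x i l * x i' p) ⊗ₜ[kq k] (y l j * y p j')) +
      rw' k j j' • (∑ l, ∑ p, (x i l * x i' p) ⊗ₜ[kq k] (y l j' * y p j)) =
      ∑ l, ∑ p, (x i l * x i' p) ⊗ₜ[kq k]
        (rc k l p • (y l j * y p j') + rw' k l p • (y p j * y l j')) := by
    have hy' := fun l p => hy l p j j'
    simp only [hy', Finset.smul_sum, ← Finset.sum_add_distrib]
    simp only [TensorProduct.tmul_add, TensorProduct.tmul_smul]
  rw [h1, h2]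
  simp only [TensorProduct.tmul_add, TensorProduct.add_tmul, Finset.sum_add_distrib]
  congr 1
  · simp only [TensorProduct.smul_tmul]
  · rw [Finset.sum_comm]
    refine Finset.sum_congr rfl fun l _ => Finset.sum_congr rfl fun p _ => ?_
    rw [rw'_comm k p l, TensorProduct.smul_tmul]

/-- Inversions with values in any linear order. -/
def invR {a : ℕ} {R : Type} [LinearOrder R] (f : Fin a → R) : ℕ :=
  ((Finset.univ : Finset (Fin a × Fin a)).filter fun p => p.1 < p.2 ∧ f p.2 < f p.1).card

lemma swap_lt_iff {s : ℕ} (t t' : Fin s) (ht : (t' : ℕ) = t + 1) (a b : Fin s)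
    (h1 : ¬ (a = t ∧ b = t')) (h2 : ¬ (a = t' ∧ b = t)) :
    Equiv.swap t t' a < Equiv.swap t t' b ↔ a < b := by
  simp only [Equiv.swap_apply_def]
  simp only [Fin.ext_iff, Fin.lt_def] at *
  split_ifs <;> omega

lemma invR_swap {s : ℕ} {R : Type} [LinearOrder R] (f : Fin s → R) (t t' : Fin s)
    (ht : (t' : ℕ) = t + 1) (hf : f t < f t') :
    invR (f ∘ Equiv.swap t t') = invR f + 1 := by
  have hlt : t < t' := by rw [Fin.lt_def]; omega
  unfold invR
  rw [← Finset.card_map (Equiv.prodCongr (Equiv.swap t t') (Equiv.swap t t')).toEmbedding,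
    ← Finset.card_insert_of_notMem (a := (t', t))]
  swap
  · simp [hlt.not_gt, Prod.exists]
  congr 1
  ext ⟨a, b⟩
  simp only [Finset.mem_map_equiv, Finset.mem_filter, Finset.mem_univ, true_and,
    Finset.mem_insert, Equiv.prodCongr_symm, Equiv.symm_swap, Equiv.prodCongr_apply, Prod.map,
    Function.comp, Equiv.swap_apply_self, Prod.mk.injEq]
  by_cases h1 : a = t ∧ b = t'
  · obtain ⟨rfl, rfl⟩ := h1
    simp [hlt.not_gt, hlt.ne, hf.not_gt]
  by_cases h2 : a = t' ∧ b = t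
  · obtain ⟨rfl, rfl⟩ := h2
    simp [hlt, hf]
  · rw [swap_lt_iff t t' ht a b h1 h2]
    simp [h2]

lemma qCoeff_succ (k : Type) [Field k] (l : ℕ) :
    qCoeff k (l + 1) = - (qInv k) * qCoeff k l := by
  simp only [qCoeff, qInv, pow_succ]
  push_cast
  rw [neg_add, LaurentPolynomial.T_add]
  ring

lemma ofFn_prod_split {A : Type} [Semiring A] (t : ℕ) : ∀ (s : ℕ) (h : Fin s → A) (ht : t + 1 < s),
    ∃ L R : A, ∀ h' : Fin s → A, (∀ i : Fin s, (i : ℕ) ≠ t → (i : ℕ) ≠ t + 1 → h' i = h i) →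
      (List.ofFn h').prod = L * (h' ⟨t, by omega⟩ * h' ⟨t + 1, ht⟩) * R := by
  induction t with
  | zero =>
    intro s h ht
    obtain ⟨s, rfl⟩ : ∃ r, s = r + 2 := ⟨s - 2, by omega⟩
    refine ⟨1, (List.ofFn fun i : Fin s => h i.succ.succ).prod, fun h' hh => ?_⟩
    rw [List.ofFn_succ, List.ofFn_succ, List.prod_cons, List.prod_cons, one_mul, ← mul_assoc]
    congr 2
    congr 1
    funext i
    exact hh _ (by simp) (by simp)
  | succ t ih =>
    intro s h ht
    obtain ⟨s, rfl⟩ : ∃ r, s = r + 1 := ⟨s - 1, by omega⟩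
    obtain ⟨L, R, hLR⟩ := ih s (fun i => h i.succ) (by omega)
    refine ⟨h 0 * L, R, fun h' hh => ?_⟩
    rw [List.ofFn_succ, List.prod_cons, hLR (fun i => h' i.succ), hh 0 (by simp) (by simp)]
    · simp only [mul_assoc]; rfl
    · intro i h1 h2
      exact hh _ (by simpa using h1) (by simpa using h2)

lemma sum_perm_pair {s : ℕ} {A : Type} [AddCommMonoid A] (F G : Equiv.Perm (Fin s) → A)
    (t t' : Fin s) (htt : t ≠ t')
    (h : ∀ σ : Equiv.Perm (Fin s), σ t < σ t' →
      F σ + F (σ * Equiv.swap t t') = G σ + G (σ * Equiv.swap t t')) :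
    ∑ σ, F σ = ∑ σ, G σ := by
  have key : ∀ F : Equiv.Perm (Fin s) → A, ∑ σ, F σ =
      ∑ σ with σ t < σ t', (F σ + F (σ * Equiv.swap t t')) := by
    intro F
    rw [← Finset.sum_filter_add_sum_filter_not Finset.univ
      (fun σ : Equiv.Perm (Fin s) => σ t < σ t'), Finset.sum_add_distrib]
    congr 1
    refine Finset.sum_bij' (fun σ _ => σ * Equiv.swap t t') (fun σ _ => σ * Equiv.swap t t')
      ?_ ?_ ?_ ?_ ?_
    · intro σ hσ
      simp at hσ ⊢
      exact lt_of_le_of_ne hσ fun h => htt (σ.injective h).symm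
    · intro σ hσ
      simp at hσ ⊢
      exact hσ.le
    · intro σ _; simp [mul_assoc]
    · intro σ _; simp [mul_assoc]
    · intro σ _; simp [mul_assoc]
  rw [key F, key G]
  refine Finset.sum_congr rfl fun σ hσ => h σ (by simpa using hσ)

section minor
variable (k : Type) [Field k] (R C : Type) [LinearOrder R] [LinearOrder C]

lemma minor_swap (s : ℕ) (f : Fin s → R) (col : Fin s → C) (hcol : StrictMono col)
    (t t' : Fin s) (ht : (t' : ℕ) = t + 1) (hf : f t' < f t) :
    qMinorG k R C s f col = (- qInv k) • qMinorG k R C s (f ∘ Equiv.swap t t') col := by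
  have htt : t ≠ t' := by rw [Ne, Fin.ext_iff]; omega
  unfold qMinorG
  rw [Finset.smul_sum]
  refine sum_perm_pair _ _ t t' htt fun σ hσ => ?_
  obtain ⟨L, R', hLR⟩ := ofFn_prod_split (t : ℕ) s
    (fun i => qgen k R C (f i) (col (σ i))) (by omega)
  have e1 : (⟨(t : ℕ), by omega⟩ : Fin s) = t := rfl
  have e2 : (⟨(t : ℕ) + 1, by omega⟩ : Fin s) = t' := Fin.ext ht.symm
  have sw : ∀ i : Fin s, (i : ℕ) ≠ t → (i : ℕ) ≠ t + 1 → Equiv.swap t t' i = i := by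
    intro i h1 h2
    exact Equiv.swap_apply_of_ne_of_ne (by rw [Ne, Fin.ext_iff]; omega)
      (by rw [Ne, Fin.ext_iff]; omega)
  rw [hLR (fun i => qgen k R C (f i) (col (σ i))) (fun i h1 h2 => rfl),
    hLR (fun i => qgen k R C (f i) (col ((σ * Equiv.swap t t') i)))
      (fun i h1 h2 => by simp [sw i h1 h2]),
    hLR (fun i => qgen k R C ((f ∘ Equiv.swap t t') i) (col (σ i)))
      (fun i h1 h2 => by simp [sw i h1 h2]),
    hLR (fun i => qgen k R C ((f ∘ Equiv.swap t t') i) (col ((σ * Equiv.swap t t') i)))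
      (fun i h1 h2 => by simp [sw i h1 h2])]
  have hinv : inversions ⇑(σ * Equiv.swap t t') = inversions ⇑σ + 1 :=
    invR_swap (⇑σ) t t' ht hσ
  have q1 := qgen_qcomm k R C _ _ _ _ hf (hcol hσ)
  have q2 := qgen_comm k R C _ _ _ _ hf (hcol hσ)
  rw [hinv]
  simp only [e1, e2, qCoeff_succ, Function.comp, Equiv.Perm.coe_mul, Equiv.swap_apply_left,
    Equiv.swap_apply_right]
  rw [q1, q2]
  simp only [mul_add, add_mul, mul_smul_comm, smul_mul_assoc]
  match_scalars
  · linear_combination (- qCoeff k (inversions ⇑σ)) * qInv_mul_qParam k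
  · ring

lemma minor_eq (s : ℕ) (f : Fin s → R) (col : Fin s → C) (hcol : StrictMono col)
    (t t' : Fin s) (ht : (t' : ℕ) = t + 1) (hf : f t = f t') :
    qMinorG k R C s f col = 0 := by
  have htt : t ≠ t' := by rw [Ne, Fin.ext_iff]; omega
  unfold qMinorG
  rw [← Finset.sum_const_zero (s := (Finset.univ : Finset (Equiv.Perm (Fin s))))]
  refine sum_perm_pair _ _ t t' htt fun σ hσ => ?_
  obtain ⟨L, R', hLR⟩ := ofFn_prod_split (t : ℕ) s
    (fun i => qgen k R C (f i) (col (σ i))) (by omega)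
  have e1 : (⟨(t : ℕ), by omega⟩ : Fin s) = t := rfl
  have e2 : (⟨(t : ℕ) + 1, by omega⟩ : Fin s) = t' := Fin.ext ht.symm
  have sw : ∀ i : Fin s, (i : ℕ) ≠ t → (i : ℕ) ≠ t + 1 → Equiv.swap t t' i = i := by
    intro i h1 h2
    exact Equiv.swap_apply_of_ne_of_ne (by rw [Ne, Fin.ext_iff]; omega)
      (by rw [Ne, Fin.ext_iff]; omega)
  rw [hLR (fun i => qgen k R C (f i) (col (σ i))) (fun i h1 h2 => rfl),
    hLR (fun i => qgen k R C (f i) (col ((σ * Equiv.swap t t') i)))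
      (fun i h1 h2 => by simp [sw i h1 h2])]
  have hinv : inversions ⇑(σ * Equiv.swap t t') = inversions ⇑σ + 1 :=
    invR_swap (⇑σ) t t' ht hσ
  have q1 := qgen_row k R C (f t') _ _ (hcol hσ)
  rw [hinv]
  simp only [e1, e2, qCoeff_succ, Equiv.Perm.coe_mul, Equiv.swap_apply_left,
    Equiv.swap_apply_right, Function.comp, hf]
  rw [q1]
  simp only [mul_smul_comm, smul_mul_assoc]
  module

lemma exists_descent {s : ℕ} {X : Type} [LinearOrder X] (f : Fin s → X) (h : ¬ Monotone f) :
    ∃ t t' : Fin s, (t' : ℕ) = t + 1 ∧ f t' < f t := by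
  by_contra! hc
  apply h
  cases s with
  | zero => intro a; exact a.elim0
  | succ s =>
    rw [Fin.monotone_iff_le_succ]
    intro i
    exact hc _ _ (by simp)

lemma exists_adj_eq {s : ℕ} {X : Type} [LinearOrder X] (f : Fin s → X) (h : Monotone f)
    (hi : ¬ Function.Injective f) :
    ∃ t t' : Fin s, (t' : ℕ) = t + 1 ∧ f t = f t' := by
  by_contra! hc
  apply hi
  apply StrictMono.injective
  cases s with
  | zero => intro a; exact a.elim0
  | succ s =>
    rw [Fin.strictMono_iff_lt_succ]
    intro i
    exact lt_of_le_of_ne (h (Fin.castSucc_lt_succ).le) (hc _ _ (by simp))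

lemma minor_sort (s : ℕ) (col : Fin s → C) (hcol : StrictMono col) (l : ℕ) :
    ∀ f : Fin s → R, invR f = l →
    qMinorG k R C s f col = qCoeff k l • qMinorG k R C s (f ∘ Tuple.sort f) col := by
  induction l with
  | zero =>
    intro f hf
    have hm : Monotone f := by
      by_contra hm
      obtain ⟨t, t', ht, h⟩ := exists_descent f hm
      unfold invR at hf
      rw [Finset.card_eq_zero, Finset.filter_eq_empty_iff] at hf
      exact hf (Finset.mem_univ (t, t')) ⟨by rw [Fin.lt_def]; simp; omega, h⟩
    rw [Tuple.sort_eq_refl_iff_monotone.mpr hm]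
    simp [qCoeff]
  | succ l ih =>
    intro f hf
    have hm : ¬ Monotone f := by
      intro hm
      have : invR f = 0 := by
        unfold invR
        rw [Finset.card_eq_zero, Finset.filter_eq_empty_iff]
        rintro ⟨a, b⟩ _ ⟨h1, h2⟩
        exact (hm h1.le).not_gt h2
      omega
    obtain ⟨t, t', ht, h⟩ := exists_descent f hm
    have h2 := invR_swap (f ∘ Equiv.swap t t') t t' ht (by simpa using h)
    have h3 : (f ∘ Equiv.swap t t') ∘ Equiv.swap t t' = f := by
      funext i; simp
    rw [h3] at h2
    rw [minor_swap k R C s f col hcol t t' ht h, ih _ (by omega), qCoeff_succ,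
      Tuple.comp_perm_comp_sort_eq_comp_sort, smul_smul]

lemma minor_not_inj (s : ℕ) (f : Fin s → R) (col : Fin s → C) (hcol : StrictMono col)
    (hf : ¬ Function.Injective f) : qMinorG k R C s f col = 0 := by
  rw [minor_sort k R C s col hcol _ f rfl]
  obtain ⟨t, t', ht, h⟩ := exists_adj_eq (f ∘ Tuple.sort f) (Tuple.monotone_sort f) (by
    intro h
    exact hf ((Equiv.injective_comp (Tuple.sort f) f).mp h))
  rw [minor_eq k R C s _ col hcol t t' ht h, smul_zero]

lemma minor_perm (s : ℕ) (f : Fin s → R) (hf : StrictMono f) (col : Fin s → C)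
    (hcol : StrictMono col) (τ : Equiv.Perm (Fin s)) :
    qMinorG k R C s (f ∘ τ) col = qCoeff k (inversions ⇑τ) • qMinorG k R C s f col := by
  rw [minor_sort k R C s col hcol (inversions ⇑τ) (f ∘ τ) (by
    simp [invR, inversions, hf.lt_iff_lt]), Tuple.comp_perm_comp_sort_eq_comp_sort,
    Tuple.sort_eq_refl_iff_monotone.mpr hf.monotone]
  rfl
end minor

lemma ofFn_prod_tmul {K A B : Type} [CommRing K] [Semiring A] [Semiring B] [Algebra K A] [Algebra K B]
    (s : ℕ) : ∀ (x : Fin s → A) (y : Fin s → B),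
    (List.ofFn fun i => x i ⊗ₜ[K] y i).prod = (List.ofFn x).prod ⊗ₜ[K] (List.ofFn y).prod := by
  induction s with
  | zero => intro x y; simp [Algebra.TensorProduct.one_def]
  | succ s ih =>
    intro x y
    simp only [List.ofFn_succ, List.prod_cons, ih, Algebra.TensorProduct.tmul_mul_tmul]

lemma ofFn_prod_sum {K A M : Type} [CommRing K] [Semiring A] [Algebra K A] [Fintype M]
    (s : ℕ) (x : Fin s → M → A) :
    (List.ofFn fun i => ∑ l, x i l).prod =
      ∑ f : Fin s → M, (List.ofFn fun i => x i (f i)).prod := by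
  classical
  have := (MultilinearMap.mkPiAlgebraFin K s A).map_sum (g := x)
  simpa [MultilinearMap.mkPiAlgebraFin_apply] using this

lemma col_strictMono (m : ℕ) : StrictMono (fun t : Fin m => (⟨-(m : ℤ) + (t : ℕ), by
      have := t.2
      simp only [Finset.mem_Icc]
      omega⟩ : ColI m)) := by
  intro a b h
  rw [Subtype.mk_lt_mk]
  rw [Fin.lt_def] at h
  omega

/-- The increasing enumeration of the rows in `J`. -/
def rowOf (m n : ℕ) (J : Finset ℤ) (hJ : J.card = m)
    (hsub : J ⊆ Finset.Icc (-(m : ℤ)) ((n : ℤ) - 1)) : Fin m → RowI m n :=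
  fun s => ⟨J.orderEmbOfFin hJ s, hsub (Finset.orderEmbOfFin_mem J hJ s)⟩

lemma rowOf_strictMono (m n : ℕ) (J : Finset ℤ) (hJ : J.card = m)
    (hsub : J ⊆ Finset.Icc (-(m : ℤ)) ((n : ℤ) - 1)) : StrictMono (rowOf m n J hJ hsub) := by
  intro a b h
  exact (J.orderEmbOfFin hJ).strictMono h

lemma rowOf_image (m n : ℕ) (J : Finset ℤ) (hJ : J.card = m)
    (hsub : J ⊆ Finset.Icc (-(m : ℤ)) ((n : ℤ) - 1)) :
    Set.range (fun t => (rowOf m n J hJ hsub t : ℤ)) = J := by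
  exact Finset.range_orderEmbOfFin J hJ

lemma coact_minor (k : Type) [Field k] (m n : ℕ)
    (Λ : QMat k m n →ₐ[kq k] QSL k m n ⊗[kq k] QMat k m n) (hΛ : coactqProp k m n Λ)
    (I : Finset ℤ) (hI : I.card = m)
    (hsub : I ⊆ Finset.Icc (-(m : ℤ)) ((n : ℤ) - 1)) :
    Λ (qMinor k m n I hI hsub) =
      ∑ J ∈ ((Finset.Icc (-(m : ℤ)) ((n : ℤ) - 1)).powersetCard m).attach,
        qgMinor k m n m I J.1 hI (Finset.mem_powersetCard.mp J.2).2 hsub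
            (Finset.mem_powersetCard.mp J.2).1 ⊗ₜ[kq k]
          qMinor k m n J.1 (Finset.mem_powersetCard.mp J.2).2
            (Finset.mem_powersetCard.mp J.2).1 := by
  classical
  set col : Fin m → ColI m := fun t => ⟨-(m : ℤ) + (t : ℕ), by
      have := t.2
      simp only [Finset.mem_Icc]
      omega⟩ with hcoldef
  have hcol : StrictMono col := col_strictMono m
  set G : (Fin m → RowI m n) → QSL k m n :=
    fun f => (List.ofFn fun t => qgSL k m n (rowOf m n I hI hsub t) (f t)).prod with hG
  have hΛ' : ∀ i j, Λ (qgen k (RowI m n) (ColI m) i j) =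
    ∑ l : RowI m n, qgSL k m n i l ⊗ₜ[kq k] qgen k (RowI m n) (ColI m) l j := hΛ
  have step1 : Λ (qMinor k m n I hI hsub) =
      ∑ f : Fin m → RowI m n, G f ⊗ₜ[kq k] qMinorG k (RowI m n) (ColI m) m f col := by
    have : qMinor k m n I hI hsub = qMinorG k (RowI m n) (ColI m) m (rowOf m n I hI hsub) col :=
      rfl
    rw [this]
    unfold qMinorG
    simp only [map_sum, map_smul, map_list_prod, List.map_ofFn, Function.comp_def, hΛ']
    simp only [ofFn_prod_sum (K := kq k), ofFn_prod_tmul, TensorProduct.tmul_sum,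
      TensorProduct.tmul_smul, Finset.smul_sum]
    rw [Finset.sum_comm]
  have step2 : ∀ J : Finset ℤ, ∀ (hJ : J.card = m)
      (hJs : J ⊆ Finset.Icc (-(m : ℤ)) ((n : ℤ) - 1)),
      qgMinor k m n m I J hI hJ hsub hJs ⊗ₜ[kq k] qMinor k m n J hJ hJs =
      ∑ τ : Equiv.Perm (Fin m), G (rowOf m n J hJ hJs ∘ τ) ⊗ₜ[kq k]
        qMinorG k (RowI m n) (ColI m) m (rowOf m n J hJ hJs ∘ τ) col := by
    intro J hJ hJs
    have : qMinor k m n J hJ hJs = qMinorG k (RowI m n) (ColI m) m (rowOf m n J hJ hJs) col :=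
      rfl
    rw [this]
    have : qgMinor k m n m I J hI hJ hsub hJs = ∑ τ : Equiv.Perm (Fin m),
        qCoeff k (inversions ⇑τ) • G (rowOf m n J hJ hJs ∘ τ) := by
      unfold qgMinor qMinorG
      simp only [map_sum, map_smul, map_list_prod, List.map_ofFn, Function.comp_def]
      rfl
    rw [this, TensorProduct.sum_tmul]
    refine Finset.sum_congr rfl fun τ _ => ?_
    rw [minor_perm k _ _ m _ (rowOf_strictMono m n J hJ hJs) col hcol τ, TensorProduct.smul_tmul]
  rw [step1]
  simp only [step2]
  rw [Finset.sum_sigma']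
  symm
  refine Finset.sum_of_injOn (fun p => rowOf m n p.1.1 (Finset.mem_powersetCard.mp p.1.2).2
    (Finset.mem_powersetCard.mp p.1.2).1 ∘ p.2) ?_ ?_ ?_ ?_
  · rintro ⟨⟨J, hJ⟩, τ⟩ _ ⟨⟨J', hJ'⟩, τ'⟩ _ h
    have e : J = J' := by
      have h1 := rowOf_image m n J (Finset.mem_powersetCard.mp hJ).2
        (Finset.mem_powersetCard.mp hJ).1
      have h2 := rowOf_image m n J' (Finset.mem_powersetCard.mp hJ').2
        (Finset.mem_powersetCard.mp hJ').1
      have h3 : Set.range (fun t => ((rowOf m n J (Finset.mem_powersetCard.mp hJ).2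
        (Finset.mem_powersetCard.mp hJ).1 ∘ τ) t : ℤ)) = Set.range (fun t =>
        ((rowOf m n J' (Finset.mem_powersetCard.mp hJ').2
        (Finset.mem_powersetCard.mp hJ').1 ∘ τ') t : ℤ)) := by
        dsimp only at h
        rw [h]
      have h4 := τ.surjective.range_comp (fun t => (rowOf m n J (Finset.mem_powersetCard.mp hJ).2
        (Finset.mem_powersetCard.mp hJ).1 t : ℤ))
      have h5 := τ'.surjective.range_comp (fun t => (rowOf m n J'
        (Finset.mem_powersetCard.mp hJ').2 (Finset.mem_powersetCard.mp hJ').1 t : ℤ))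
      apply Finset.coe_injective
      rw [← h1, ← h2, ← h4, ← h5]
      exact h3
    subst e
    have : τ = τ' := by
      ext1 t
      exact (rowOf_strictMono m n J _ _).injective (congrFun h t)
    rw [this]
  · intro x _; simp
  · intro f _ hf
    rw [minor_not_inj k _ _ m f col hcol, TensorProduct.tmul_zero]
    intro hinj
    apply hf
    have hinj' : Function.Injective (fun t => (f t : ℤ)) := Subtype.val_injective.comp hinj
    set J : Finset ℤ := Finset.univ.image (fun t => (f t : ℤ)) with hJ
    have hc : J.card = m := by
      rw [hJ, Finset.card_image_of_injective _ hinj']; simp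
    have hs : J ⊆ Finset.Icc (-(m : ℤ)) ((n : ℤ) - 1) := by
      intro z hz
      simp only [hJ, Finset.mem_image] at hz
      obtain ⟨t, _, rfl⟩ := hz
      exact (f t).2
    have hex : ∀ t, ∃ u, rowOf m n J hc hs u = f t := by
      intro t
      have : (f t : ℤ) ∈ Set.range (fun t => (rowOf m n J hc hs t : ℤ)) := by
        rw [rowOf_image]; simp [hJ]
      obtain ⟨u, hu⟩ := this
      exact ⟨u, Subtype.ext hu⟩
    choose τ hτ using hex
    have hτi : Function.Injective τ := by
      intro a b hab
      apply hinj
      rw [← hτ, ← hτ, hab]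
    refine ⟨⟨⟨J, Finset.mem_powersetCard.mpr ⟨hs, hc⟩⟩,
      Equiv.ofBijective τ (Finite.injective_iff_bijective.mp hτi)⟩, by simp, ?_⟩
    funext t
    exact hτ t
  · intro x _; rfl

lemma qmat_hom_ext {k : Type} [Field k] {R C A : Type} [LinearOrder R] [LinearOrder C]
    [Semiring A] [Algebra (kq k) A] (f g : QMatG k R C →ₐ[kq k] A)
    (h : ∀ i j, f (qgen k R C i j) = g (qgen k R C i j)) : f = g := by
  apply RingQuot.ringQuot_ext'
  apply FreeAlgebra.hom_ext
  funext p
  exact h p.1 p.2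

/-- the quantum coaction `Λ^q_{(m,n)}` exists, satisfies
`Λ^q(D_I) = Σ_J D^{g,J}_I ⊗ D_J`, hence maps `k_q[Δ_{m,n}]` into
`k_q[SL_{m,n}] ⊗ k_q[Δ_{m,n}]`, and the restrictions are compatible with the
transition maps: `(φ^q ⊗ e^q) ∘ λ^q_{(m',n')} = λ^q_{(m,n)} ∘ e^q`. -/
theorem stmt16 (k : Type) [Field k] (m n m' n' : ℕ) (hm : 0 < m) (hn : 0 < n)
    (hmm : m ≤ m') (hnn : n ≤ n') :
    -- existence
    (∃ Λ : QMat k m n →ₐ[kq k] QSL k m n ⊗[kq k] QMat k m n, coactqProp k m n Λ) ∧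
    (∀ Λ : QMat k m n →ₐ[kq k] QSL k m n ⊗[kq k] QMat k m n, coactqProp k m n Λ →
      -- the image of a quantum minor
      (∀ (I : Finset ℤ) (hI : I.card = m)
          (hsub : I ⊆ Finset.Icc (-(m : ℤ)) ((n : ℤ) - 1)),
        Λ (qMinor k m n I hI hsub) =
          ∑ J ∈ ((Finset.Icc (-(m : ℤ)) ((n : ℤ) - 1)).powersetCard m).attach,
            qgMinor k m n m I J.1 hI (Finset.mem_powersetCard.mp J.2).2 hsub
                (Finset.mem_powersetCard.mp J.2).1 ⊗ₜ[kq k]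
              qMinor k m n J.1 (Finset.mem_powersetCard.mp J.2).2
                (Finset.mem_powersetCard.mp J.2).1) ∧
      -- Λ maps the quantum grassmannian into k_q[SL_{m,n}] ⊗ k_q[Δ_{m,n}]
      (∀ x ∈ QDeltaSub k m n, Λ x ∈
        (Algebra.TensorProduct.map (AlgHom.id (kq k) (QSL k m n))
          (QDeltaSub k m n).val).range) ∧
      -- compatibility with the transition maps
      (∀ Λ' : QMat k m' n' →ₐ[kq k] QSL k m' n' ⊗[kq k] QMat k m' n',
        coactqProp k m' n' Λ' →
        ∀ E : QMat k m' n' →ₐ[kq k] QMat k m n, EqProp k m n m' n' E →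
        ∀ φ : QSL k m' n' →ₐ[kq k] QSL k m n, phiqProp k m n m' n' φ →
        ∀ x ∈ QDeltaSub k m' n',
          Algebra.TensorProduct.map φ E (Λ' x) = Λ (E x))) := by
  refine ⟨?_, fun Λ hΛ => ⟨coact_minor k m n Λ hΛ, ?_, ?_⟩⟩
  · exact (((isQM_qgen k (RowI m n) (RowI m n)).map (qslMk k m n)).comul
      (isQM_qgen k (RowI m n) (ColI m))).lift
  · have : QDeltaSub k m n ≤ ((Algebra.TensorProduct.map (AlgHom.id (kq k) (QSL k m n))
          (QDeltaSub k m n).val).range).comap Λ := by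
      refine Algebra.adjoin_le ?_
      rintro _ ⟨I, hI, hsub, rfl⟩
      rw [SetLike.mem_coe, Subalgebra.mem_comap, coact_minor k m n Λ hΛ]
      refine Subalgebra.sum_mem _ fun J _ => ?_
      refine ⟨qgMinor k m n m I J.1 hI (Finset.mem_powersetCard.mp J.2).2 hsub
                (Finset.mem_powersetCard.mp J.2).1 ⊗ₜ[kq k]
              ⟨qMinor k m n J.1 (Finset.mem_powersetCard.mp J.2).2
                (Finset.mem_powersetCard.mp J.2).1,
                Algebra.subset_adjoin ⟨_, _, _, rfl⟩⟩, rfl⟩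
    exact this
  · intro Λ' hΛ' E hE φ hφ x _
    have : (Algebra.TensorProduct.map φ E).comp Λ' = Λ.comp E := by
      apply qmat_hom_ext
      intro i j
      change Algebra.TensorProduct.map φ E (Λ' (av k m' n' i j)) = Λ (E (av k m' n' i j))
      rw [hΛ' i j, map_sum]
      simp only [Algebra.TensorProduct.map_tmul]
      by_cases hj : j.1 ∈ Finset.Icc (-(m : ℤ)) (-1 : ℤ)
      · by_cases hi : i.1 ∈ Finset.Icc (-(m : ℤ)) ((n : ℤ) - 1)
        · rw [hE i j, dif_pos ⟨hi, hj⟩, hΛ]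
          symm
          refine Finset.sum_of_injOn (fun l => ⟨l.1, ?_⟩) ?_ ?_ ?_ ?_
          · have := l.2
            simp only [Finset.mem_Icc] at this ⊢
            omega
          · intro a _ b _ h
            exact Subtype.ext (Subtype.mk.inj h)
          · intro x _; simp
          · intro l _ hl
            have hl' : l.1 ∉ Finset.Icc (-(m : ℤ)) ((n : ℤ) - 1) := by
              intro h
              exact hl ⟨⟨l.1, h⟩, by simp, rfl⟩
            rw [hφ i l, dif_neg (fun h => hl' h.2), if_neg (fun h : i.1 = l.1 => hl' (h ▸ hi)),
              TensorProduct.zero_tmul]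
          · intro l _
            rw [hφ, hE, dif_pos ⟨hi, l.2⟩, dif_pos ⟨l.2, hj⟩]
        · have hne : ∀ l : RowI m' n', l.1 ∉ Finset.Icc (-(m : ℤ)) ((n : ℤ) - 1) →
              l.1 ≠ j.1 := by
            intro l hl h
            apply hl
            rw [h]
            simp only [Finset.mem_Icc] at hj ⊢
            omega
          rw [hE i j, dif_neg (fun h => hi h.1), if_neg (hne i hi), map_zero]
          refine Finset.sum_eq_zero fun l _ => ?_
          by_cases hl : l.1 ∈ Finset.Icc (-(m : ℤ)) ((n : ℤ) - 1)
          · rw [hφ, dif_neg (fun h => hi h.1), if_neg (fun h : i.1 = l.1 => hi (h ▸ hl)),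
              TensorProduct.zero_tmul]
          · rw [hE l j, dif_neg (fun h => hl h.1), if_neg (hne l hl), TensorProduct.tmul_zero]
      · have hjr : j.1 ∈ Finset.Icc (-(m' : ℤ)) ((n' : ℤ) - 1) := by
          have := j.2
          simp only [Finset.mem_Icc] at this ⊢
          omega
        have hjn : j.1 ∉ Finset.Icc (-(m : ℤ)) ((n : ℤ) - 1) := by
          have := j.2
          simp only [Finset.mem_Icc] at this hj ⊢
          omega
        rw [hE i j, dif_neg (fun h => hj h.2), Finset.sum_eq_single (⟨j.1, hjr⟩ : RowI m' n')]
        · rw [hφ, hE, dif_neg (fun h => hjn h.2), dif_neg (fun h => hj h.2), if_pos rfl]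
          split_ifs
          · rw [map_one, Algebra.TensorProduct.one_def]
          · rw [map_zero, TensorProduct.zero_tmul]
        · intro l _ hl
          rw [hE l j, dif_neg (fun h => hj h.2), if_neg (fun h => hl (Subtype.ext h)),
            TensorProduct.tmul_zero]
        · intro h; exact absurd (Finset.mem_univ _) h
    exact DFunLike.congr_fun this x

end
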